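/- There exists a constant c such that for every natural number n, every binary string x of length n, and every natural number k with c·log(n+2) ≤ k ≤ n, there exists a finite nonempty set S of binary strings with x ∈ S, C(S) ≤ k + c·log(n+2), and C(S) + log|S| ≤ C^{B(k)}(x) + c·log(n+2). (A program for x that halts within time B(k) can be converted into a two-part description based on a model of complexity at most k + O(log n) with essentially the same total length.) -/

import Mathlib

open scoped Classical

/-- Binary strings: finite sequences over `{0,1}`. -/
abbrev BStr := List Bool

/-- Complexity of `x` with respect to the description method `D`:
the minimal length of a `p` with `D(p) = x`, as an extended natural
(`⊤` if no such `p` exists). -/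
noncomputable def Cw (D : BStr →. BStr) (x : BStr) : ℕ∞ :=
  ⨅ (p : BStr) (_ : x ∈ D p), (p.length : ℕ∞)

/-- A description method is optimal if it is partial computable and gives
complexity at most that of any other partial computable description method,
up to an additive constant. -/
def OptimalDM (D : BStr →. BStr) : Prop :=
  Partrec D ∧ ∀ D' : BStr →. BStr, Partrec D' →
    ∃ c : ℕ, ∀ x : BStr, Cw D x ≤ Cw D' x + (c : ℕ∞)

/-- Plain Kolmogorov complexity (finite value) w.r.t. a description method. -/
noncomputable def C (D : BStr →. BStr) (x : BStr) : ℕ := (Cw D x).toNat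

/-- Conditional complexity of `x` given `y` w.r.t. the conditional
description method `E`. -/
noncomputable def CwCond (E : BStr → BStr →. BStr) (x y : BStr) : ℕ∞ :=
  ⨅ (p : BStr) (_ : x ∈ E p y), (p.length : ℕ∞)

/-- Optimal conditional description method. -/
def OptimalCDM (E : BStr → BStr →. BStr) : Prop :=
  Partrec₂ E ∧ ∀ E' : BStr → BStr →. BStr, Partrec₂ E' →
    ∃ c : ℕ, ∀ x y : BStr, CwCond E x y ≤ CwCond E' x y + (c : ℕ∞)

/-- Conditional Kolmogorov complexity (finite value). -/
noncomputable def Ccond (E : BStr → BStr →. BStr) (x y : BStr) : ℕ :=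
  (CwCond E x y).toNat

/-- `enc` is a computable injective encoding of finite sets of binary strings
as binary strings (computability is expressed on the level of lists of
elements, since every finite set is the set of members of a list). -/
def SetEncoding (enc : Finset BStr → BStr) : Prop :=
  Function.Injective enc ∧ Computable (fun l : List BStr => enc l.toFinset)

/-- A computable step-counting semantics for the description method `D`:
`ev t p` is the output of `D` on program `p` within `t` computation steps
(`none` if the computation has not converged within `t` steps). -/
structure TimedDM (D : BStr →. BStr) where
  ev : ℕ → BStr → Option BStr
  computable : Computable₂ ev
  mono : ∀ {t t' : ℕ} {p y : BStr}, t ≤ t' → ev t p = some y → ev t' p = some y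
  spec : ∀ p y : BStr, y ∈ D p ↔ ∃ t : ℕ, ev t p = some y

/-- Time-bounded complexity `C^t(x)`: the minimal length of a program
producing `x` within `t` steps (`⊤` if there is none). -/
noncomputable def Cwt (ev : ℕ → BStr → Option BStr) (t : ℕ) (x : BStr) : ℕ∞ :=
  ⨅ (p : BStr) (_ : ev t p = some x), (p.length : ℕ∞)

/-- `B D k`: the largest natural number whose binary representation has
complexity at most `k` (naturals are identified with their binary
representations via `Nat.bits`). -/
noncomputable def B (D : BStr →. BStr) (k : ℕ) : ℕ :=
  sSup {m : ℕ | Cw D (Nat.bits m) ≤ (k : ℕ∞)}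

/-- Kolmogorov's `(α,β)`-stochasticity: `x` belongs to a finite set `S` of
complexity at most `α` in which it is random up to `β`. -/
def Stochastic (D : BStr →. BStr) (enc : Finset BStr → BStr)
    (α β : ℕ) (x : BStr) : Prop :=
  ∃ S : Finset BStr, x ∈ S ∧ C D (enc S) ≤ α ∧
    Real.logb 2 S.card - β ≤ (C D x : ℝ)

/-- The binary entropy function (with the convention `H(0) = H(1) = 0`,
which holds automatically since `logb 2 0 = 0` in Mathlib). -/
noncomputable def binH (p : ℝ) : ℝ :=
  -(p * Real.logb 2 p) - (1 - p) * Real.logb 2 (1 - p)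

/-!
Let `p` be a shortest program for `x` that halts within time `m = B(k)`, and `l` its length. If
`l ≤ k + O(log l)`, the model `{x}` will do, and if `l > |x|`, the set of all strings of length at
most `|x|`. Otherwise, enumerate the strings of complexity at most `l`. From `m` one computes the
list of all strings produced by programs of length at most `l` within time `m`; it contains `x`.
Each of the `2 ^ e` strings of length `e` then yields a string outside that list of complexity at
most `e + k + O(log l)`. If `e` is `l - k` up to a logarithmic term, all of these still have to be
enumerated, so at least `2 ^ e` strings appear after `x`. Hence `x` lies in a complete block of
`2 ^ e` consecutive strings of the enumeration, a model which is determined by `l`, `e` and its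
index, and the index has at most `l + 1 - e = k + O(log l)` bits.
-/

section Lists

variable {α : Type*}

theorem primrec₂_list_insert [Primcodable α] [BEq α] [LawfulBEq α] :
    Primrec₂ fun (a : α) (l : List α) => l.insert a := by
  have h_mem : PrimrecPred fun q : α × List α => q.1 ∈ q.2 :=
    ((PrimrecRel.exists_mem_list (R := fun a b : α => a = b) Primrec.eq).comp
      Primrec.snd Primrec.fst).of_eq fun _ => by simp
  exact (Primrec.ite h_mem Primrec.snd (Primrec.list_cons.comp Primrec.fst Primrec.snd)).of_eq
    fun _ => by simp [List.insert]

theorem primrec₂_list_union [Primcodable α] [BEq α] [LawfulBEq α] :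
    Primrec₂ fun l l' : List α => l ∪ l' :=
  Primrec.list_foldr Primrec.fst Primrec.snd
    (primrec₂_list_insert.comp (Primrec.fst.comp Primrec.snd) (Primrec.snd.comp Primrec.snd)).to₂

-- Mathlib's version is tied to the `BEq` instance derived from `DecidableEq`.
theorem suffix_list_union [BEq α] [LawfulBEq α] (l l' : List α) : l' <:+ l ∪ l' := by
  induction l with
  | nil => exact List.suffix_rfl
  | cons a l ih =>
    by_cases h : a ∈ l ∪ l'
    · simpa [h] using ih
    · simpa [h] using ih.trans (List.suffix_cons _ _)

theorem primrec_option_toList [Primcodable α] : Primrec (Option.toList : Option α → List α) :=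
  (Primrec.option_casesOn Primrec.id (Primrec.const [])
    (Primrec.list_cons.comp Primrec.snd (Primrec.const [])).to₂).of_eq fun o => by cases o <;> rfl

/-- The `j`-th block of `s` consecutive entries of `L`, counted from the end of `L`, so that
blocks are not disturbed by entries added at the front. -/
def listBlock (L : List α) (s j : ℕ) : List α := (L.reverse.drop (j * s)).take s

theorem primrec_listBlock [Primcodable α] :
    Primrec fun q : List α × ℕ × ℕ => listBlock q.1 q.2.1 q.2.2 := by
  have hs : Primrec fun q : List α × ℕ × ℕ => q.2.1 := Primrec.fst.comp Primrec.snd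
  have hj : Primrec fun q : List α × ℕ × ℕ => q.2.2 := Primrec.snd.comp Primrec.snd
  exact Primrec.list_take.comp hs
    (Primrec.list_drop.comp (Primrec.nat_mul.comp hj hs) (Primrec.list_reverse.comp Primrec.fst))

theorem length_listBlock_le (L : List α) (s j : ℕ) : (listBlock L s j).length ≤ s :=
  List.length_take_le _ _

theorem listBlock_eq_of_suffix {L L' : List α} {s j : ℕ} (h : L <:+ L')
    (hj : (j + 1) * s ≤ L.length) : listBlock L' s j = listBlock L s j := by
  obtain ⟨R, hR⟩ := List.reverse_prefix.2 h
  rw [Nat.succ_mul] at hj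
  rw [listBlock, listBlock, ← hR,
    List.drop_append_of_le_length (by rw [List.length_reverse]; omega),
    List.take_append_of_le_length (by rw [List.length_drop, List.length_reverse]; omega)]

theorem exists_mem_listBlock_of_suffix {L L' : List α} {s : ℕ} {x : α} (hs : 0 < s) (h : L <:+ L')
    (hlen : L.length + s ≤ L'.length) (hx : x ∈ L) :
    ∃ j, (j + 1) * s ≤ L'.length ∧ x ∈ listBlock L' s j := by
  obtain ⟨R, hR⟩ := List.reverse_prefix.2 h
  obtain ⟨a, ha, rfl⟩ := List.getElem_of_mem (List.mem_reverse.2 hx)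
  have h_pos : a / s * s + a % s = a := Nat.div_add_mod' a s
  refine ⟨a / s, ?_, List.mem_of_getElem? (i := a % s) ?_⟩
  · rw [List.length_reverse] at ha
    rw [Nat.succ_mul]
    omega
  · rw [listBlock, List.getElem?_take_of_lt (Nat.mod_lt _ hs), List.getElem?_drop, h_pos, ← hR,
      List.getElem?_append_left ha, List.getElem?_eq_getElem ha]

end Lists

section Strings

/-- The number with binary digits `l`, least significant digit first; a left inverse of
`Nat.bits` that tolerates leading zeros. -/
def ofBits (l : BStr) : ℕ := l.foldr Nat.bit 0

theorem ofBits_bits (m : ℕ) : ofBits m.bits = m := by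
  induction m using Nat.binaryRec' with
  | zero => simp [ofBits]
  | bit b n h ih =>
    rw [Nat.bits_append_bit n b h]
    exact congrArg (Nat.bit b) ih

theorem primrec_ofBits : Primrec ofBits := by
  have h_bit : Primrec₂ Nat.bit :=
    (Primrec.nat_add.comp (Primrec.nat_mul.comp (Primrec.const 2) Primrec.snd)
      ((Primrec.dom_finite Bool.toNat).comp Primrec.fst)).of_eq fun q => (Nat.bit_val q.1 q.2).symm
  exact Primrec.list_foldr Primrec.id (Primrec.const 0)
    (h_bit.comp (Primrec.fst.comp Primrec.snd) (Primrec.snd.comp Primrec.snd)).to₂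

theorem primrec₂_pow : Primrec₂ ((· ^ ·) : ℕ → ℕ → ℕ) :=
  Primrec₂.unpaired'.1 Nat.Primrec.pow

/-- The self-delimiting code of `a`: the length of `Nat.bits a` in unary, then `Nat.bits a`. -/
def selfDelim (a : ℕ) : BStr := List.replicate a.size true ++ false :: a.bits

/-- Splits a string that starts with a self-delimiting code into the coded number and the rest. -/
def splitSelfDelim (p : BStr) : ℕ × BStr :=
  (ofBits ((p.drop (p.idxOf false + 1)).take (p.idxOf false)),
    (p.drop (p.idxOf false + 1)).drop (p.idxOf false))

theorem length_selfDelim (a : ℕ) : (selfDelim a).length = 2 * a.size + 1 := by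
  simp only [selfDelim, List.length_append, List.length_replicate, List.length_cons,
    Nat.size_eq_bits_len]
  omega

theorem splitSelfDelim_append (a : ℕ) (r : BStr) :
    splitSelfDelim (selfDelim a ++ r) = (a, r) := by
  have h_idx : (selfDelim a ++ r).idxOf false = a.size := by
    rw [selfDelim, List.append_assoc, List.idxOf_append_of_notMem (by simp)]
    simp
  have h_drop : (selfDelim a ++ r).drop (a.size + 1) = a.bits ++ r := by
    simp [selfDelim, List.drop_append]
  rw [splitSelfDelim, h_idx, h_drop, List.take_left' (Nat.size_eq_bits_len a),
    List.drop_left' (Nat.size_eq_bits_len a), ofBits_bits]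

theorem primrec_splitSelfDelim : Primrec splitSelfDelim := by
  have h_idx : Primrec fun p : BStr => p.idxOf false :=
    Primrec.list_idxOf.comp (Primrec.const false) Primrec.id
  have h_drop : Primrec fun p : BStr => p.drop (p.idxOf false + 1) :=
    Primrec.list_drop.comp (Primrec.succ.comp h_idx) Primrec.id
  exact (primrec_ofBits.comp (Primrec.list_take.comp h_idx h_drop)).pair
    (Primrec.list_drop.comp h_idx h_drop)

theorem size_pair_le {a b n : ℕ} (ha : a ≤ n) (hb : b ≤ n) :
    (Nat.pair a b).size ≤ 2 * (n + 1).size := by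
  refine Nat.size_le.2 ((Nat.pair_lt_max_add_one_sq a b).trans ?_)
  calc (max a b + 1) ^ 2 ≤ (n + 1) ^ 2 := by gcongr; exact max_le ha hb
    _ < (2 ^ (n + 1).size) ^ 2 := by gcongr; exact Nat.lt_size_self _
    _ = 2 ^ (2 * (n + 1).size) := by rw [← pow_mul, mul_comm]

/-- The strings of length at most `n`. -/
def stringsUpTo : ℕ → List BStr
  | 0 => [[]]
  | n + 1 => [] :: ((stringsUpTo n).map (List.cons false) ++ (stringsUpTo n).map (List.cons true))

theorem primrec_stringsUpTo : Primrec stringsUpTo := by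
  have h_map (b : Bool) : Primrec fun q : ℕ × List BStr => q.2.map (List.cons b) :=
    Primrec.list_map Primrec.snd (Primrec.list_cons.comp (Primrec.const b) Primrec.snd)
  refine (Primrec.nat_rec₁ [[]] (Primrec.list_cons.comp (Primrec.const [])
    (Primrec.list_append.comp (h_map false) (h_map true))).to₂).of_eq fun n => ?_
  induction n with
  | zero => rfl
  | succ n ih => simp only [stringsUpTo, ← ih]

theorem mem_stringsUpTo {n : ℕ} {x : BStr} : x ∈ stringsUpTo n ↔ x.length ≤ n := by
  induction n generalizing x with
  | zero => simp [stringsUpTo]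
  | succ n ih => rcases x with _ | ⟨_ | _, x⟩ <;> simp [stringsUpTo, ih]

theorem length_stringsUpTo_lt (n : ℕ) : (stringsUpTo n).length < 2 ^ (n + 1) := by
  induction n with
  | zero => simp [stringsUpTo]
  | succ n ih =>
    simp only [stringsUpTo, List.length_cons, List.length_append, List.length_map]
    rw [pow_succ]
    omega

/-- A string outside the list `L` that encodes `u`. -/
def freshString (L : List BStr) (u : BStr) : BStr := L.flatten ++ true :: u

theorem freshString_notMem (L : List BStr) (u : BStr) : freshString L u ∉ L := by
  intro h
  have h_len := (List.sublist_flatten_of_mem h).length_le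
  rw [freshString, List.length_append, List.length_cons] at h_len
  omega

theorem freshString_injective (L : List BStr) : Function.Injective (freshString L) :=
  fun u v h => by simpa [freshString] using h

theorem primrec₂_freshString : Primrec₂ freshString :=
  Primrec.list_append.comp (Primrec.list_flatten.comp Primrec.fst)
    (Primrec.list_cons.comp (Primrec.const true) Primrec.snd)

end Strings

section Logarithm

theorem one_le_logb_add_two (n : ℕ) : 1 ≤ Real.logb 2 ((n : ℝ) + 2) := by
  rw [Real.le_logb_iff_rpow_le one_lt_two (by positivity)]
  simp

theorem le_of_mul_logb_add_two_le {c k n : ℕ} (h : (c : ℝ) * Real.logb 2 ((n : ℝ) + 2) ≤ k) :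
    c ≤ k :=
  Nat.cast_le.1 ((le_mul_of_one_le_right c.cast_nonneg (one_le_logb_add_two n)).trans h)

theorem size_succ_le_two_mul_logb (n : ℕ) :
    ((n + 1).size : ℝ) ≤ 2 * Real.logb 2 (n + 2) := by
  have h_log : 1 ≤ Nat.log 2 (n + 2) := Nat.log_pos one_lt_two (by omega)
  have h_size : (n + 1).size ≤ 2 * Nat.log 2 (n + 2) := by
    refine Nat.size_le.2 (((Nat.lt_succ_self _).trans
      (Nat.lt_pow_succ_log_self one_lt_two (n + 2))).trans_le ?_)
    exact Nat.pow_le_pow_right two_pos (by omega)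
  have h_logb : (Nat.log 2 (n + 2) : ℝ) ≤ Real.logb 2 (n + 2) := by
    exact_mod_cast Real.natLog_le_logb (n + 2) 2
  have h_cast : ((n + 1).size : ℝ) ≤ 2 * Nat.log 2 (n + 2) := by exact_mod_cast h_size
  linarith

end Logarithm

section Complexity

variable {D : BStr →. BStr}

theorem iInf_length_le_iff {P : BStr → Prop} {N : ℕ} :
    (⨅ (p : BStr) (_ : P p), (p.length : ℕ∞)) ≤ N ↔ ∃ p, P p ∧ p.length ≤ N := by
  rw [← ENat.lt_add_one_iff (ENat.natCast_ne_top N)]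
  simp_rw [iInf_lt_iff, exists_prop]
  simp only [ENat.lt_add_one_iff (ENat.natCast_ne_top N), Nat.cast_le]

theorem Cw_le_iff {x : BStr} {N : ℕ} : Cw D x ≤ N ↔ ∃ p, x ∈ D p ∧ p.length ≤ N :=
  iInf_length_le_iff

theorem encard_setOf_Cw_le_lt (D : BStr →. BStr) (l : ℕ) :
    {y | Cw D y ≤ l}.encard < 2 ^ (l + 1) := by
  choose! f hf hfl using fun y (hy : Cw D y ≤ l) => Cw_le_iff.1 hy
  have h_inj : Set.InjOn f {y | Cw D y ≤ l} := fun y hy z hz hyz =>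
    Part.mem_unique (hf y hy) (hyz ▸ hf z hz)
  have h_maps : Set.MapsTo f {y | Cw D y ≤ l} ((stringsUpTo l).toFinset : Set BStr) :=
    fun y hy => by simpa [mem_stringsUpTo] using hfl y hy
  calc {y | Cw D y ≤ l}.encard
      ≤ ((stringsUpTo l).toFinset : Set BStr).encard :=
        Set.encard_le_encard_of_injOn h_maps h_inj
    _ < 2 ^ (l + 1) := by
        rw [Set.encard_coe_eq_coe_finsetCard]
        exact_mod_cast (List.toFinset_card_le _).trans_lt (length_stringsUpTo_lt l)

theorem finite_setOf_Cw_le (D : BStr →. BStr) (l : ℕ) : {y | Cw D y ≤ l}.Finite :=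
  Set.encard_lt_top_iff.1 ((encard_setOf_Cw_le_lt D l).trans_le le_top)

theorem Cw_bits_B_le {k : ℕ} (h : ∃ m : ℕ, Cw D m.bits ≤ k) : Cw D (B D k).bits ≤ k :=
  Nat.sSup_mem h
    ((finite_setOf_Cw_le D k).preimage (Function.LeftInverse.injective ofBits_bits).injOn).bddAbove

theorem OptimalDM.exists_Cw_le_of_partrec (hD : OptimalDM D) {F : ℕ × BStr →. BStr}
    (hF : Partrec F) :
    ∃ c : ℕ, ∀ a r y, y ∈ F (a, r) → Cw D y ≤ (r.length + 2 * a.size + c : ℕ) := by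
  obtain ⟨c, hc⟩ := hD.2 (fun p => F (splitSelfDelim p))
    (hF.comp primrec_splitSelfDelim.to_comp)
  refine ⟨1 + c, fun a r y hy => ?_⟩
  have h_split : Cw (fun p => F (splitSelfDelim p)) y ≤ (r.length + 2 * a.size + 1 : ℕ) := by
    refine Cw_le_iff.2 ⟨selfDelim a ++ r, by rwa [splitSelfDelim_append], ?_⟩
    rw [List.length_append, length_selfDelim]
    omega
  calc Cw D y ≤ (r.length + 2 * a.size + 1 : ℕ) + c := (hc y).trans (by gcongr)
    _ = (r.length + 2 * a.size + (1 + c) : ℕ) := by push_cast; ring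

theorem OptimalDM.exists_Cw_bits_zero_le (hD : OptimalDM D) :
    ∃ c : ℕ, Cw D (Nat.bits 0) ≤ c := by
  obtain ⟨c, hc⟩ := hD.exists_Cw_le_of_partrec
    (F := fun s => Part.some s.2) Computable.snd.partrec
  exact ⟨_, hc 0 (Nat.bits 0) _ (Part.mem_some _)⟩

end Complexity

namespace TimedDM

variable {D : BStr →. BStr} (T : TimedDM D)

/-- The output of the program handled at step `i` of the dovetailed simulation of all programs of
length at most `l`; step `Nat.pair t a` runs the `a`-th program for `t` steps. -/
def output (l i : ℕ) : Option BStr :=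
  (stringsUpTo l)[i.unpair.2]?.bind (T.ev i.unpair.1)

/-- The enumeration, without repetitions, of the strings of complexity at most `l`: the strings
found in the first `i` steps of the simulation, newest first. -/
def enum (l : ℕ) : ℕ → List BStr
  | 0 => []
  | i + 1 => (T.output l i).toList ∪ enum l i

/-- An initial part of the enumeration that contains the outputs of all programs of length at most
`l` halting within `t` steps. -/
def enumWithin (l t : ℕ) : List BStr := T.enum l (Nat.pair t (stringsUpTo l).length)

theorem computable₂_output : Computable₂ T.output :=
  Computable.option_bind
    (Computable.list_getElem?.comp (primrec_stringsUpTo.to_comp.comp Computable.fst)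
      (Computable.snd.comp (Computable.unpair.comp Computable.snd)))
    (T.computable.comp (Computable.fst.comp (Computable.unpair.comp
      (Computable.snd.comp Computable.fst))) Computable.snd)

theorem computable₂_enum : Computable₂ T.enum := by
  have h_output : Computable fun q : (ℕ × ℕ) × ℕ × List BStr => T.output q.1.1 q.2.1 :=
    T.computable₂_output.comp (Computable.fst.comp Computable.fst)
      (Computable.fst.comp Computable.snd)
  refine (Computable.nat_rec Computable.snd (Computable.const [])
    (primrec₂_list_union.to_comp.comp (primrec_option_toList.to_comp.comp h_output)
      (Computable.snd.comp Computable.snd)).to₂).of_eq fun ⟨l, i⟩ => ?_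
  induction i with
  | zero => rfl
  | succ i ih => exact congrArg ((T.output l i).toList ∪ ·) ih

theorem computable₂_enumWithin : Computable₂ T.enumWithin :=
  T.computable₂_enum.comp Computable.fst (Primrec₂.natPair.to_comp.comp Computable.snd
    (Computable.list_length.comp (primrec_stringsUpTo.to_comp.comp Computable.fst)))

theorem nodup_enum (l i : ℕ) : (T.enum l i).Nodup := by
  induction i with
  | zero => exact List.nodup_nil
  | succ i ih => exact ih.union _

theorem enum_suffix (l : ℕ) {i j : ℕ} (h : i ≤ j) : T.enum l i <:+ T.enum l j := by
  induction j, h using Nat.le_induction with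
  | base => exact List.suffix_rfl
  | succ j _ ih => exact ih.trans (suffix_list_union _ _)

theorem Cw_le_of_mem_enum {l i : ℕ} {y : BStr} (hy : y ∈ T.enum l i) : Cw D y ≤ l := by
  induction i with
  | zero => simp [enum] at hy
  | succ i ih =>
    rcases List.mem_union_iff.1 hy with h_new | h_old
    · obtain ⟨p, hp, hpy⟩ := Option.bind_eq_some_iff.1 (Option.mem_toList.1 h_new)
      exact Cw_le_iff.2
        ⟨p, (T.spec p y).2 ⟨_, hpy⟩, mem_stringsUpTo.1 (List.mem_of_getElem? hp)⟩
    · exact ih h_old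

theorem length_enum_lt (l i : ℕ) : (T.enum l i).length < 2 ^ (l + 1) := by
  have h_sub : ((T.enum l i).toFinset : Set BStr) ⊆ {y | Cw D y ≤ l} :=
    fun y hy => T.Cw_le_of_mem_enum (List.mem_toFinset.1 hy)
  have h_lt := (Set.encard_le_encard h_sub).trans_lt (encard_setOf_Cw_le_lt D l)
  rw [Set.encard_coe_eq_coe_finsetCard, List.toFinset_card_of_nodup (T.nodup_enum l i)] at h_lt
  exact_mod_cast h_lt

theorem mem_enumWithin_of_ev {l t : ℕ} {p y : BStr} (hp : p.length ≤ l)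
    (h : T.ev t p = some y) : y ∈ T.enumWithin l t := by
  obtain ⟨a, ha, rfl⟩ := List.getElem_of_mem (mem_stringsUpTo.2 hp)
  have h_output : T.output l (Nat.pair t a) = some y := by
    simpa [output, List.getElem?_eq_getElem ha] using h
  have h_mem : y ∈ T.enum l (Nat.pair t a + 1) :=
    List.mem_union_iff.2 (Or.inl (Option.mem_toList.2 h_output))
  exact (T.enum_suffix l (Nat.pair_lt_pair_right t ha)).subset h_mem

theorem eventually_forall_mem_enum (l : ℕ) :
    ∀ᶠ i in Filter.atTop, ∀ y, Cw D y ≤ l → y ∈ T.enum l i := by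
  refine (Filter.eventually_all_finite (finite_setOf_Cw_le D l)).2 fun y hy => ?_
  obtain ⟨p, hp, hpl⟩ := Cw_le_iff.1 hy
  obtain ⟨t, ht⟩ := (T.spec p y).1 hp
  filter_upwards [Filter.eventually_ge_atTop _] with i hi
  exact (T.enum_suffix l hi).subset (T.mem_enumWithin_of_ev hpl ht)

theorem exists_suffix_enum_of_forall_Cw_freshString_le {l t e : ℕ}
    (h : ∀ u : BStr, u.length = e → Cw D (freshString (T.enumWithin l t) u) ≤ l) :
    ∃ i, T.enumWithin l t <:+ T.enum l i ∧
      (T.enumWithin l t).length + 2 ^ e ≤ (T.enum l i).length := by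
  obtain ⟨i, h_all, hi⟩ :=
    ((T.eventually_forall_mem_enum l).and (Filter.eventually_ge_atTop _)).exists
  have h_suffix : T.enumWithin l t <:+ T.enum l i := T.enum_suffix l hi
  let fresh : List BStr := (Finset.univ : Finset (List.Vector Bool e)).toList.map fun v =>
    freshString (T.enumWithin l t) v.toList
  have h_nodup : (T.enumWithin l t ++ fresh).Nodup := by
    refine (T.nodup_enum _ _).append ?_ fun y hy hy' => ?_
    · exact (Finset.nodup_toList _).map
        ((freshString_injective _).comp List.Vector.toList_injective)
    · obtain ⟨v, -, rfl⟩ := List.mem_map.1 hy'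
      exact freshString_notMem _ _ hy
  have h_sub : T.enumWithin l t ++ fresh ⊆ T.enum l i := by
    refine List.append_subset.2 ⟨h_suffix.subset, fun y hy => ?_⟩
    obtain ⟨v, -, rfl⟩ := List.mem_map.1 hy
    exact h_all _ (h _ v.toList_length)
  have h_len := (h_nodup.subperm h_sub).length_le
  simp only [fresh, List.length_append, List.length_map, Finset.length_toList, Finset.card_univ,
    card_vector, Fintype.card_bool] at h_len
  exact ⟨i, h_suffix, h_len⟩

theorem exists_mem_listBlock_enum {l t e : ℕ} {p x : BStr} (hp : p.length ≤ l)
    (hx : T.ev t p = some x)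
    (h : ∀ u : BStr, u.length = e → Cw D (freshString (T.enumWithin l t) u) ≤ l) :
    ∃ i j, (j + 1) * 2 ^ e ≤ (T.enum l i).length ∧ x ∈ listBlock (T.enum l i) (2 ^ e) j := by
  obtain ⟨i, h_suffix, h_len⟩ := T.exists_suffix_enum_of_forall_Cw_freshString_le h
  exact ⟨i, exists_mem_listBlock_of_suffix (by positivity) h_suffix h_len
    (T.mem_enumWithin_of_ev hp hx)⟩

theorem size_add_le_of_listBlock_enum {l i j e : ℕ}
    (hj : (j + 1) * 2 ^ e ≤ (T.enum l i).length) : j.size + e ≤ l + 1 := by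
  calc j.size + e ≤ (j + 1).size + e := by gcongr; exact Nat.size_le_size j.le_succ
    _ = ((j + 1) <<< e).size := (Nat.size_shiftLeft j.succ_ne_zero e).symm
    _ ≤ l + 1 := Nat.size_le.2 (by
      rw [Nat.shiftLeft_eq]
      exact hj.trans_lt (T.length_enum_lt l i))

/-- The `j`-th block of `2 ^ e` consecutive strings in the enumeration of the strings of complexity
at most `l`, found by waiting until that many strings have appeared. -/
def enumBlock (q : ℕ × ℕ × ℕ) : Part (List BStr) :=
  (Nat.rfind fun i => Part.some (decide ((q.2.2 + 1) * 2 ^ q.2.1 ≤ (T.enum q.1 i).length))).map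
    fun i => listBlock (T.enum q.1 i) (2 ^ q.2.1) q.2.2

theorem partrec_enumBlock : Partrec T.enumBlock := by
  have h_enum : Computable fun s : (ℕ × ℕ × ℕ) × ℕ => T.enum s.1.1 s.2 :=
    T.computable₂_enum.comp (Computable.fst.comp Computable.fst) Computable.snd
  have h_pow : Computable fun s : (ℕ × ℕ × ℕ) × ℕ => 2 ^ s.1.2.1 :=
    primrec₂_pow.to_comp.comp (Computable.const 2)
      (Computable.fst.comp (Computable.snd.comp Computable.fst))
  have h_index : Computable fun s : (ℕ × ℕ × ℕ) × ℕ => s.1.2.2 :=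
    Computable.snd.comp (Computable.snd.comp Computable.fst)
  have h_full : Computable₂ fun (q : ℕ × ℕ × ℕ) (i : ℕ) =>
      decide ((q.2.2 + 1) * 2 ^ q.2.1 ≤ (T.enum q.1 i).length) :=
    Primrec.nat_le.decide.to_comp.comp
      (Primrec.nat_mul.to_comp.comp (Computable.succ.comp h_index) h_pow)
      (Computable.list_length.comp h_enum)
  exact (Partrec.rfind h_full.partrec₂).map
    (primrec_listBlock.to_comp.comp (h_enum.pair (h_pow.pair h_index))).to₂

theorem listBlock_mem_enumBlock {l e i j : ℕ} (hj : (j + 1) * 2 ^ e ≤ (T.enum l i).length) :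
    listBlock (T.enum l i) (2 ^ e) j ∈ T.enumBlock (l, e, j) := by
  obtain ⟨i₀, hi₀, h_le⟩ := Nat.rfind_min'
    (p := fun i => decide ((j + 1) * 2 ^ e ≤ (T.enum l i).length)) (decide_eq_true hj)
  have hj₀ : (j + 1) * 2 ^ e ≤ (T.enum l i₀).length := by simpa using Nat.rfind_spec hi₀
  exact (Part.mem_map_iff _).2
    ⟨i₀, hi₀, (listBlock_eq_of_suffix (T.enum_suffix l h_le) hj₀).symm⟩

end TimedDM

section Enumeration

variable {D : BStr →. BStr} {enc : Finset BStr → BStr}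

theorem OptimalDM.exists_Cw_freshString_le (hD : OptimalDM D) (T : TimedDM D) :
    ∃ c : ℕ, ∀ (l m k : ℕ) (u : BStr), Cw D m.bits ≤ k →
      Cw D (freshString (T.enumWithin l m) u) ≤
        (u.length + k + 2 * (Nat.pair l u.length).size + c : ℕ) := by
  let F : ℕ × BStr →. BStr := fun s => (D (s.2.drop s.1.unpair.2)).map fun o =>
    freshString (T.enumWithin s.1.unpair.1 (ofBits o)) (s.2.take s.1.unpair.2)
  have h_params : Computable fun s : ℕ × BStr => s.1.unpair :=
    Computable.unpair.comp Computable.fst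
  have h_len : Computable fun s : ℕ × BStr => s.1.unpair.2 := Computable.snd.comp h_params
  have hF : Partrec F :=
    (hD.1.comp (Primrec.list_drop.to_comp.comp h_len Computable.snd)).map
      (primrec₂_freshString.to_comp.comp
        (T.computable₂_enumWithin.comp (Computable.fst.comp (h_params.comp Computable.fst))
          (primrec_ofBits.to_comp.comp Computable.snd))
        ((Primrec.list_take.to_comp.comp h_len Computable.snd).comp Computable.fst)).to₂
  obtain ⟨c, hc⟩ := hD.exists_Cw_le_of_partrec hF
  refine ⟨c, fun l m k u hm => ?_⟩
  obtain ⟨q, hq, hqk⟩ := Cw_le_iff.1 hm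
  have h_mem : freshString (T.enumWithin l m) u ∈ F (Nat.pair l u.length, u ++ q) := by
    simpa [F] using ⟨m.bits, hq, by rw [ofBits_bits]⟩
  refine (hc _ _ _ h_mem).trans (Nat.cast_le.2 ?_)
  rw [List.length_append]
  omega

theorem OptimalDM.exists_Cw_enumBlock_le (hD : OptimalDM D) (T : TimedDM D)
    (henc : Computable fun L : List BStr => enc L.toFinset) :
    ∃ c : ℕ, ∀ (l e j : ℕ) (L : List BStr), L ∈ T.enumBlock (l, e, j) →
      Cw D (enc L.toFinset) ≤ (j.size + 2 * (Nat.pair l e).size + c : ℕ) := by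
  have h_params : Computable fun s : ℕ × BStr => s.1.unpair :=
    Computable.unpair.comp Computable.fst
  obtain ⟨c, hc⟩ := hD.exists_Cw_le_of_partrec
    ((T.partrec_enumBlock.comp ((Computable.fst.comp h_params).pair
      ((Computable.snd.comp h_params).pair (primrec_ofBits.to_comp.comp Computable.snd)))).map
      (henc.comp Computable.snd).to₂)
  refine ⟨c, fun l e j L hL => ?_⟩
  rw [← Nat.size_eq_bits_len]
  refine hc (Nat.pair l e) j.bits _ ((Part.mem_map_iff _).2 ⟨L, ?_, rfl⟩)
  simpa only [Nat.unpair_pair, ofBits_bits] using hL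

end Enumeration

section TwoPart

/-- `x` has a two-part description: a model `S ∋ x` of complexity at most `α` such that the
complexity of `S` and the `⌈log |S|⌉` bits selecting `x` in `S` sum up to at most `β`. -/
def TwoPart (D : BStr →. BStr) (enc : Finset BStr → BStr) (x : BStr) (α β : ℕ∞) : Prop :=
  ∃ S : Finset BStr, x ∈ S ∧ Cw D (enc S) ≤ α ∧ Cw D (enc S) + Nat.clog 2 S.card ≤ β

variable {D : BStr →. BStr} {enc : Finset BStr → BStr}

theorem TwoPart.mono {x : BStr} {α β α' β' : ℕ∞} (h : TwoPart D enc x α β) (hα : α ≤ α')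
    (hβ : β ≤ β') : TwoPart D enc x α' β' :=
  let ⟨S, hx, h₁, h₂⟩ := h
  ⟨S, hx, h₁.trans hα, h₂.trans hβ⟩

theorem twoPart_of_Cw_le {x : BStr} {S : Finset BStr} {a s : ℕ} (hx : x ∈ S)
    (ha : Cw D (enc S) ≤ a) (hs : S.card ≤ 2 ^ s) : TwoPart D enc x a (a + s : ℕ) := by
  refine ⟨S, hx, ha, ?_⟩
  push_cast
  gcongr
  exact Nat.clog_le_of_le_pow hs

theorem OptimalDM.exists_twoPart_singleton (hD : OptimalDM D)
    (henc : Computable fun L : List BStr => enc L.toFinset) :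
    ∃ c : ℕ, ∀ x p : BStr, x ∈ D p →
      TwoPart D enc x (p.length + c : ℕ) (p.length + c : ℕ) := by
  have h_enc : Computable fun y : BStr => enc {y} :=
    (henc.comp (Computable.list_cons.comp Computable.id (Computable.const []))).of_eq
      fun _ => by simp
  obtain ⟨c, hc⟩ := hD.exists_Cw_le_of_partrec (F := fun s => (D s.2).map fun y => enc {y})
    ((hD.1.comp Computable.snd).map (h_enc.comp Computable.snd).to₂)
  refine ⟨c, fun x p hx => ?_⟩
  have h_Cw : Cw D (enc {x}) ≤ (p.length + c : ℕ) := hc 0 p _ (Part.mem_map _ hx)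
  exact twoPart_of_Cw_le (s := 0) (Finset.mem_singleton_self x) h_Cw (by simp)

theorem OptimalDM.exists_twoPart_stringsUpTo (hD : OptimalDM D)
    (henc : Computable fun L : List BStr => enc L.toFinset) :
    ∃ c : ℕ, ∀ x : BStr, TwoPart D enc x (2 * x.length.size + c : ℕ)
      (2 * x.length.size + c + (x.length + 1) : ℕ) := by
  obtain ⟨c, hc⟩ := hD.exists_Cw_le_of_partrec
    (henc.comp (primrec_stringsUpTo.to_comp.comp Computable.fst)).partrec
  refine ⟨c, fun x => twoPart_of_Cw_le (S := (stringsUpTo x.length).toFinset)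
    (List.mem_toFinset.2 (mem_stringsUpTo.2 le_rfl)) ?_ ?_⟩
  · simpa using hc x.length [] _ (Part.mem_some _)
  · exact (List.toFinset_card_le _).trans (length_stringsUpTo_lt _).le

theorem OptimalDM.exists_twoPart_of_ev (hD : OptimalDM D) (T : TimedDM D)
    (henc : Computable fun L : List BStr => enc L.toFinset) :
    ∃ c : ℕ, ∀ (m k : ℕ) (p x : BStr), Cw D m.bits ≤ k → T.ev m p = some x →
      TwoPart D enc x (k + c * (p.length + 1).size : ℕ)
        (p.length + c * (p.length + 1).size : ℕ) := by
  obtain ⟨c₁, h_fresh⟩ := hD.exists_Cw_freshString_le T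
  obtain ⟨c₂, h_block⟩ := hD.exists_Cw_enumBlock_le T henc
  obtain ⟨c₃, h_single⟩ := hD.exists_twoPart_singleton henc
  refine ⟨9 + c₁ + c₂ + c₃, fun m k p x hm hx => ?_⟩
  have h_size_pair {e : ℕ} (he : e ≤ p.length) :
      (Nat.pair p.length e).size ≤ 2 * (p.length + 1).size := size_pair_le le_rfl he
  have hw : 1 ≤ (p.length + 1).size := Nat.size_pos.2 p.length.succ_pos
  generalize (p.length + 1).size = w at h_size_pair hw ⊢
  have h₁ : c₁ ≤ c₁ * w := Nat.le_mul_of_pos_right _ hw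
  have h₂ : c₂ ≤ c₂ * w := Nat.le_mul_of_pos_right _ hw
  have h₃ : c₃ ≤ c₃ * w := Nat.le_mul_of_pos_right _ hw
  rw [show (9 + c₁ + c₂ + c₃) * w = 9 * w + c₁ * w + c₂ * w + c₃ * w by ring]
  rcases le_or_gt p.length (k + 4 * w + c₁ * w) with h_short | h_long
  · exact (h_single x p ((T.spec p x).2 ⟨m, hx⟩)).mono (Nat.cast_le.2 (by omega))
      (Nat.cast_le.2 (by omega))
  · -- With this `e`, fresh strings made from `e` bits still have complexity at most `p.length`.
    obtain ⟨e, he⟩ := Nat.exists_eq_add_of_le h_long.le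
    have h_pair := h_size_pair (e := e) (by omega)
    obtain ⟨i, j, hj, hxj⟩ := T.exists_mem_listBlock_enum (e := e) le_rfl hx fun u hu =>
      (h_fresh p.length m k u hm).trans (Nat.cast_le.2 (by rw [hu]; omega))
    have h_index := T.size_add_le_of_listBlock_enum hj
    have h_Cw := h_block _ _ j _ (T.listBlock_mem_enumBlock hj)
    refine (twoPart_of_Cw_le (List.mem_toFinset.2 hxj) h_Cw
      ((List.toFinset_card_le _).trans (length_listBlock_le _ _ _))).mono
      (Nat.cast_le.2 ?_) (Nat.cast_le.2 ?_) <;> omega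

theorem OptimalDM.exists_twoPart_Cwt (hD : OptimalDM D) (T : TimedDM D)
    (henc : Computable fun L : List BStr => enc L.toFinset) :
    ∃ c : ℕ, ∀ (m k : ℕ) (x : BStr), Cw D m.bits ≤ k →
      TwoPart D enc x (k + c * (x.length + 1).size : ℕ)
        (Cwt T.ev m x + (c * (x.length + 1).size : ℕ)) := by
  obtain ⟨c₁, h_ev⟩ := hD.exists_twoPart_of_ev T henc
  obtain ⟨c₂, h_all⟩ := hD.exists_twoPart_stringsUpTo henc
  refine ⟨c₁ + (2 + c₂), fun m k x hm => ?_⟩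
  rw [add_mul]
  rcases le_or_gt (Cwt T.ev m x) x.length with h_le | h_gt
  · obtain ⟨N, hN⟩ := ENat.ne_top_iff_exists.1 (h_le.trans_lt (ENat.natCast_lt_top _)).ne
    rw [← hN] at h_le ⊢
    obtain ⟨p, hp, hpN⟩ := iInf_length_le_iff.1 hN.ge
    have h_size : c₁ * (p.length + 1).size ≤ c₁ * (x.length + 1).size := by
      gcongr
      exact Nat.size_le_size (by have := Nat.cast_le.1 h_le; omega)
    exact (h_ev m k p x hm hp).mono (Nat.cast_le.2 (by omega)) (by norm_cast; omega)
  · have h_size : x.length.size ≤ (x.length + 1).size := Nat.size_le_size x.length.le_succ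
    have hw : c₂ ≤ c₂ * (x.length + 1).size :=
      Nat.le_mul_of_pos_right _ (Nat.size_pos.2 x.length.succ_pos)
    have h_cost : 2 * x.length.size + c₂ ≤ (2 + c₂) * (x.length + 1).size := by
      rw [add_mul]
      omega
    refine (h_all x).mono (Nat.cast_le.2 (by omega)) ?_
    calc ((2 * x.length.size + c₂ + (x.length + 1) : ℕ) : ℕ∞)
        ≤ ((x.length : ℕ∞) + 1) +
          ((c₁ * (x.length + 1).size + (2 + c₂) * (x.length + 1).size : ℕ) : ℕ∞) := by
          norm_cast
          omega
      _ ≤ _ := by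
          gcongr
          exact Order.add_one_le_of_lt h_gt

theorem TwoPart.exists_C_le {x : BStr} {a : ℕ} {β : ℕ∞} (h : TwoPart D enc x a β) :
    ∃ S : Finset BStr, x ∈ S ∧ C D (enc S) ≤ a ∧
      ∀ b : ℕ, β ≤ b → (C D (enc S) : ℝ) + Real.logb 2 S.card ≤ b := by
  obtain ⟨S, hx, ha, hβ⟩ := h
  refine ⟨S, hx, ENat.toNat_le_of_le_natCast ha, fun b hb => ?_⟩
  have h_C : (C D (enc S) : ℕ∞) = Cw D (enc S) :=
    ENat.natCast_toNat (ha.trans_lt (ENat.natCast_lt_top a)).ne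
  have h_sum : C D (enc S) + Nat.clog 2 S.card ≤ b := by
    rw [← h_C] at hβ
    exact_mod_cast hβ.trans hb
  have h_logb : Real.logb 2 S.card ≤ Nat.clog 2 S.card := by
    have h_ceil := Nat.le_ceil (Real.logb (2 : ℕ) S.card)
    rwa [Real.natCeil_logb_natCast] at h_ceil
  have h_cast : (C D (enc S) : ℝ) + Nat.clog 2 S.card ≤ b := by exact_mod_cast h_sum
  linarith

end TwoPart

theorem stmt2_general (D : BStr →. BStr) (hD : OptimalDM D) (T : TimedDM D)
    (enc : Finset BStr → BStr) (henc : Computable fun L : List BStr => enc L.toFinset) :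
    ∃ c : ℕ, 0 < c ∧ ∀ (x : BStr) (k : ℕ), c ≤ k →
      ∃ S : Finset BStr, x ∈ S ∧
        (C D (enc S) : ℝ) ≤ (k : ℝ) + (c : ℝ) * Real.logb 2 ((x.length : ℝ) + 2) ∧
        ∀ p : BStr, T.ev (B D k) p = some x →
          (C D (enc S) : ℝ) + Real.logb 2 (S.card : ℝ)
            ≤ (p.length : ℝ) + (c : ℝ) * Real.logb 2 ((x.length : ℝ) + 2) := by
  obtain ⟨c₀, h_zero⟩ := hD.exists_Cw_bits_zero_le
  obtain ⟨c, h_twoPart⟩ := hD.exists_twoPart_Cwt T henc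
  refine ⟨2 * c + c₀ + 1, by omega, fun x k hk => ?_⟩
  have hB : Cw D (B D k).bits ≤ k :=
    Cw_bits_B_le ⟨0, h_zero.trans (Nat.cast_le.2 (by omega))⟩
  have h_cost : (c : ℝ) * (x.length + 1).size ≤
      ((2 * c + c₀ + 1 : ℕ) : ℝ) * Real.logb 2 (x.length + 2) :=
    calc (c : ℝ) * (x.length + 1).size
        ≤ c * (2 * Real.logb 2 (x.length + 2)) := by
          gcongr
          exact size_succ_le_two_mul_logb x.length
      _ = ((2 * c : ℕ) : ℝ) * Real.logb 2 (x.length + 2) := by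
          push_cast
          ring
      _ ≤ ((2 * c + c₀ + 1 : ℕ) : ℝ) * Real.logb 2 (x.length + 2) := by
          have h_nonneg := zero_le_one.trans (one_le_logb_add_two x.length)
          gcongr
          omega
  obtain ⟨S, hx, hS, h_sum⟩ := (h_twoPart (B D k) k x hB).exists_C_le
  refine ⟨S, hx, ?_, fun p hp => ?_⟩
  · have h_cast : (C D (enc S) : ℝ) ≤ k + c * (x.length + 1).size := by exact_mod_cast hS
    linarith
  · have hp_sum := h_sum (p.length + c * (x.length + 1).size) (by
      push_cast
      gcongr
      exact iInf₂_le p hp)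
    push_cast at hp_sum
    linarith

/-- A program for `x` that halts within time `B(k)` can be converted into a
two-part description based on a model of complexity at most `k + O(log n)`
with essentially the same total length. -/
theorem stmt2 (D : BStr →. BStr) (hD : OptimalDM D) (T : TimedDM D)
    (enc : Finset BStr → BStr) (henc : SetEncoding enc) :
    ∃ c : ℕ, 0 < c ∧ ∀ n : ℕ, ∀ x : BStr, x.length = n → ∀ k : ℕ,
      (c : ℝ) * Real.logb 2 ((n : ℝ) + 2) ≤ (k : ℝ) → k ≤ n →
      ∃ S : Finset BStr, x ∈ S ∧
        (C D (enc S) : ℝ) ≤ (k : ℝ) + (c : ℝ) * Real.logb 2 ((n : ℝ) + 2) ∧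
        ∀ p : BStr, T.ev (B D k) p = some x →
          (C D (enc S) : ℝ) + Real.logb 2 (S.card : ℝ)
            ≤ (p.length : ℝ) + (c : ℝ) * Real.logb 2 ((n : ℝ) + 2) := by
  obtain ⟨c, hc, h⟩ := stmt2_general D hD T enc henc.2
  exact ⟨c, hc, fun _ x hn k hk _ => hn ▸ h x k (le_of_mul_logb_add_two_le (hn ▸ hk))⟩
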